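/- arXiv:1102.4469 — 5 statements merged into one kernel-verified Lean document; each statement's English description precedes it below -/
import Mathlib

section
/- For an 802.11 WLAN with n ≥ 2 stations and parameters 0 < σ ≤ T_c, T_s ≥ T_c > 0 and mean payload sizes L_i > 0, the rate region R(1) is log-convex. That is: for every pair of attempt-probability vectors τ¹, τ² ∈ (0,1)^n and every α ∈ [0,1], there exists τ* ∈ (0,1)^n such that for every i ∈ {1,…,n}, s_i(τ*) = s_i(τ¹)^α · s_i(τ²)^{1−α}; equivalently, the set {(log s_1(τ), …, log s_n(τ)) : τ ∈ (0,1)^n} is convex. -/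
open Finset

/-- Probability that all stations are idle. -/
noncomputable def Pidle {n : ℕ} (τ : Fin n → ℝ) : ℝ :=
  ∏ k, (1 - τ k)

/-- Probability of a successful transmission. -/
noncomputable def Psucc {n : ℕ} (τ : Fin n → ℝ) : ℝ :=
  ∑ i, τ i * ∏ k ∈ univ.erase i, (1 - τ k)

/-- Per-station throughput in an 802.11 WLAN. -/
noncomputable def throughput {n : ℕ} (σ Ts Tc : ℝ) (L : Fin n → ℝ)
    (τ : Fin n → ℝ) (i : Fin n) : ℝ :=
  (τ i * ∏ k ∈ univ.erase i, (1 - τ k)) * L i /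
    (σ * Pidle τ + Ts * Psucc τ + Tc * (1 - Pidle τ - Psucc τ))

/-- `c` lies below the weighted geometric mean of `a`, `b`. -/
def GM (α a b c : ℝ) : Prop := 0 ≤ a ∧ 0 ≤ b ∧ 0 ≤ c ∧ c ≤ a ^ α * b ^ (1 - α)

theorem GM.const {α : ℝ} (h0 : 0 ≤ α) (h1 : α ≤ 1) {a : ℝ} (ha : 0 ≤ a) : GM α a a a := by
  refine ⟨ha, ha, ha, ?_⟩
  rw [← Real.rpow_add_of_nonneg ha h0 (by linarith)]
  simp

theorem GM.mul {α a b c a' b' c' : ℝ} (h : GM α a b c) (h' : GM α a' b' c') :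
    GM α (a * a') (b * b') (c * c') := by
  obtain ⟨ha, hb, hc, h⟩ := h
  obtain ⟨ha', hb', hc', h'⟩ := h'
  refine ⟨by positivity, by positivity, by positivity, ?_⟩
  rw [Real.mul_rpow ha ha', Real.mul_rpow hb hb']
  calc c * c' ≤ (a ^ α * b ^ (1 - α)) * (a' ^ α * b' ^ (1 - α)) :=
        mul_le_mul h h' hc' (by positivity)
    _ = _ := by ring

theorem GM.add {α : ℝ} (h0 : 0 ≤ α) (h1 : α ≤ 1) {a b c a' b' c' : ℝ}
    (h : GM α a b c) (h' : GM α a' b' c') :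
    GM α (a + a') (b + b') (c + c') := by
  obtain ⟨ha, hb, hc, h⟩ := h
  obtain ⟨ha', hb', hc', h'⟩ := h'
  refine ⟨by positivity, by positivity, by positivity, ?_⟩
  have key : ∀ u s : ℝ, 0 ≤ u → u ≤ s → ∀ r : ℝ, u ^ r = (u / s) ^ r * s ^ r := by
    intro u s hu hus r
    have hs : 0 ≤ s := hu.trans hus
    rw [← Real.mul_rpow (div_nonneg hu hs) hs]
    rcases eq_or_lt_of_le hs with h | h
    · have : u = 0 := by linarith
      simp [this]
    · rw [div_mul_cancel₀ _ h.ne']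
  rw [key a (a + a') ha (by linarith), key b (b + b') hb (by linarith)] at h
  rw [key a' (a + a') ha' (by linarith), key b' (b + b') hb' (by linarith)] at h'
  have e1 := Real.geom_mean_le_arith_mean2_weighted h0 (sub_nonneg.2 h1)
    (div_nonneg ha (add_nonneg ha ha')) (div_nonneg hb (add_nonneg hb hb')) (by ring)
  have e2 := Real.geom_mean_le_arith_mean2_weighted h0 (sub_nonneg.2 h1)
    (div_nonneg ha' (add_nonneg ha ha')) (div_nonneg hb' (add_nonneg hb hb')) (by ring)
  have d1 : a / (a + a') + a' / (a + a') ≤ 1 := by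
    rw [← add_div]; exact div_self_le_one _
  have d2 : b / (b + b') + b' / (b + b') ≤ 1 := by
    rw [← add_div]; exact div_self_le_one _
  have hM : 0 ≤ (a + a') ^ α * (b + b') ^ (1 - α) := by positivity
  have e3 : (a / (a + a')) ^ α * (b / (b + b')) ^ (1 - α)
      + (a' / (a + a')) ^ α * (b' / (b + b')) ^ (1 - α) ≤ 1 := by
    have := mul_le_mul_of_nonneg_left d1 h0
    have := mul_le_mul_of_nonneg_left d2 (sub_nonneg.2 h1)
    linarith
  have := mul_le_mul_of_nonneg_right e3 hM
  linarith

theorem GM.sum {α : ℝ} (h0 : 0 ≤ α) (h1 : α ≤ 1) {ι : Type*} (s : Finset ι) {a b c : ι → ℝ}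
    (h : ∀ i, GM α (a i) (b i) (c i)) : GM α (∑ i ∈ s, a i) (∑ i ∈ s, b i) (∑ i ∈ s, c i) := by
  classical
  induction s using Finset.induction_on with
  | empty => simpa using GM.const h0 h1 le_rfl
  | insert i s hi ih => simpa only [Finset.sum_insert hi] using GM.add h0 h1 (h i) ih

theorem GM.prod_sub {α : ℝ} (h0 : 0 ≤ α) (h1 : α ≤ 1) {ι : Type*} (s : Finset ι) {a b c : ι → ℝ}
    (h : ∀ i, GM α (a i) (b i) (c i)) :
    GM α (∏ i ∈ s, (1 + a i) - 1) (∏ i ∈ s, (1 + b i) - 1) (∏ i ∈ s, (1 + c i) - 1) := by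
  classical
  induction s using Finset.induction_on with
  | empty => simpa using GM.const h0 h1 le_rfl
  | insert i s hi ih =>
    simp only [Finset.prod_insert hi]
    convert GM.add h0 h1 (GM.add h0 h1 ih (GM.mul (h i) ih)) (h i) using 1 <;> ring

/-- The denominator in the coordinates `x = τ / (1 - τ)`. -/
noncomputable def denomX {n : ℕ} (σ Ts Tc : ℝ) (x : Fin n → ℝ) : ℝ :=
  σ + (Ts - Tc) * ∑ i, x i + Tc * (∏ i, (1 + x i) - 1)

theorem throughput_eq {n : ℕ} (σ Ts Tc : ℝ) (L τ x : Fin n → ℝ)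
    (hτ : ∀ i, τ i ∈ Set.Ioo (0:ℝ) 1) (hx : ∀ i, x i = τ i / (1 - τ i)) (i : Fin n) :
    throughput σ Ts Tc L τ i = x i * L i / denomX σ Ts Tc x := by
  have hne : ∀ k, 0 < 1 - τ k := fun k => by linarith [(hτ k).2]
  have hP : 0 < Pidle τ := Finset.prod_pos fun k _ => hne k
  have h1 : ∀ j, τ j * ∏ k ∈ univ.erase j, (1 - τ k) = Pidle τ * x j := by
    intro j
    have : Pidle τ = (1 - τ j) * ∏ k ∈ univ.erase j, (1 - τ k) :=
      (Finset.mul_prod_erase univ (fun k => 1 - τ k) (Finset.mem_univ j)).symm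
    rw [this, hx]
    have := (hne j).ne'
    field_simp
  have h2 : Psucc τ = Pidle τ * ∑ j, x j := by
    unfold Psucc
    rw [Finset.mul_sum]
    exact Finset.sum_congr rfl fun j _ => h1 j
  have h3 : Pidle τ * ∏ j, (1 + x j) = 1 := by
    unfold Pidle
    rw [← Finset.prod_mul_distrib]
    refine Finset.prod_eq_one fun j _ => ?_
    rw [hx]
    have := (hne j).ne'
    field_simp
    ring
  unfold throughput
  rw [h1, h2]
  have h4 : σ * Pidle τ + Ts * (Pidle τ * ∑ j, x j) + Tc * (1 - Pidle τ - Pidle τ * ∑ j, x j)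
      = Pidle τ * denomX σ Ts Tc x := by
    unfold denomX
    linear_combination (-Tc) * h3
  rw [h4, mul_assoc, mul_div_mul_left _ _ hP.ne']

theorem denomX_pos {n : ℕ} {σ Ts Tc : ℝ} (hσ : 0 < σ) (hTc : 0 < Tc) (hTs : Tc ≤ Ts)
    {x : Fin n → ℝ} (hx : ∀ i, 0 < x i) : 0 < denomX σ Ts Tc x := by
  have h1 : 0 ≤ (Ts - Tc) * ∑ i, x i :=
    mul_nonneg (sub_nonneg.2 hTs) (Finset.sum_nonneg fun i _ => (hx i).le)
  have h2 : 0 ≤ Tc * (∏ i, (1 + x i) - 1) :=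
    mul_nonneg hTc.le (GM.prod_sub (α := 0) le_rfl zero_le_one univ
      (fun i => GM.const le_rfl zero_le_one (hx i).le)).1
  unfold denomX
  linarith

/-- the rate region `R(1)` of an 802.11 WLAN is log-convex. -/
theorem rate_region_log_convex (n : ℕ) (hn : 2 ≤ n)
    (σ Ts Tc : ℝ) (L : Fin n → ℝ)
    (hσ : 0 < σ) (hσTc : σ ≤ Tc) (hTc : 0 < Tc) (hTs : Tc ≤ Ts)
    (hL : ∀ i, 0 < L i)
    (τ₁ τ₂ : Fin n → ℝ)
    (hτ₁ : ∀ i, τ₁ i ∈ Set.Ioo (0:ℝ) 1) (hτ₂ : ∀ i, τ₂ i ∈ Set.Ioo (0:ℝ) 1)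
    (α : ℝ) (hα : α ∈ Set.Icc (0:ℝ) 1) :
    ∃ τ' : Fin n → ℝ, (∀ i, τ' i ∈ Set.Ioo (0:ℝ) 1) ∧
      ∀ i, throughput σ Ts Tc L τ' i =
        (throughput σ Ts Tc L τ₁ i) ^ α * (throughput σ Ts Tc L τ₂ i) ^ (1 - α) := by
  obtain ⟨h0, h1⟩ := hα
  obtain ⟨x, hx⟩ : ∃ x : Fin n → ℝ, ∀ i, x i = τ₁ i / (1 - τ₁ i) := ⟨_, fun _ => rfl⟩
  obtain ⟨y, hy⟩ : ∃ y : Fin n → ℝ, ∀ i, y i = τ₂ i / (1 - τ₂ i) := ⟨_, fun _ => rfl⟩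
  have hx0 : ∀ i, 0 < x i := fun i => by
    rw [hx]; exact div_pos (hτ₁ i).1 (by linarith [(hτ₁ i).2])
  have hy0 : ∀ i, 0 < y i := fun i => by
    rw [hy]; exact div_pos (hτ₂ i).1 (by linarith [(hτ₂ i).2])
  obtain ⟨z, hz⟩ : ∃ z : Fin n → ℝ, ∀ i, z i = x i ^ α * y i ^ (1 - α) := ⟨_, fun _ => rfl⟩
  have hz0 : ∀ i, 0 < z i := fun i => by
    rw [hz]; exact mul_pos (Real.rpow_pos_of_pos (hx0 i) _) (Real.rpow_pos_of_pos (hy0 i) _)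
  have hDx := denomX_pos hσ hTc hTs hx0
  have hDy := denomX_pos hσ hTc hTs hy0
  have hG : ∀ i, GM α (x i) (y i) (z i) := fun i =>
    ⟨(hx0 i).le, (hy0 i).le, (hz0 i).le, (hz i).le⟩
  have hle : GM α (denomX σ Ts Tc x) (denomX σ Ts Tc y) (denomX σ Ts Tc z) :=
    GM.add h0 h1 (GM.add h0 h1 (GM.const h0 h1 hσ.le)
      (GM.mul (GM.const h0 h1 (sub_nonneg.2 hTs)) (GM.sum h0 h1 univ hG)))
      (GM.mul (GM.const h0 h1 hTc.le) (GM.prod_sub h0 h1 univ hG))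
  have hle' := hle.2.2.2
  set E := denomX σ Ts Tc x ^ α * denomX σ Ts Tc y ^ (1 - α) with hE
  have hE0 : 0 < E := mul_pos (Real.rpow_pos_of_pos hDx _) (Real.rpow_pos_of_pos hDy _)
  have hcont : Continuous fun t : ℝ => denomX σ Ts Tc (fun i => t * z i) - t * E := by
    unfold denomX
    fun_prop
  have hivt := intermediate_value_Icc' (zero_le_one' ℝ) hcont.continuousOn
  obtain ⟨t, ⟨ht0, -⟩, ht⟩ := hivt (show (0:ℝ) ∈ _ from
    ⟨by simpa using hle', by simpa [denomX] using hσ.le⟩)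
  have htE : denomX σ Ts Tc (fun i => t * z i) = t * E := by
    simpa [sub_eq_zero] using ht
  have htpos : 0 < t := by
    rcases eq_or_lt_of_le ht0 with h | h
    · rw [← h] at htE
      simp [denomX] at htE
      exact absurd htE hσ.ne'
    · exact h
  have hw : ∀ i, 0 < t * z i := fun i => mul_pos htpos (hz0 i)
  have hτ' : ∀ i, t * z i / (1 + t * z i) ∈ Set.Ioo (0:ℝ) 1 := fun i =>
    ⟨div_pos (hw i) (by linarith [hw i]), by
      rw [div_lt_one (by linarith [hw i])]; linarith⟩
  refine ⟨fun i => t * z i / (1 + t * z i), hτ', fun i => ?_⟩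
  rw [throughput_eq σ Ts Tc L _ (fun i => t * z i) hτ' (fun i => by
      have : 1 + t * z i ≠ 0 := by linarith [hw i]
      field_simp
      simp) i, throughput_eq σ Ts Tc L τ₁ x hτ₁ hx i, throughput_eq σ Ts Tc L τ₂ y hτ₂ hy i, htE]
  have hLL : L i ^ α * L i ^ (1 - α) = L i := by
    rw [← Real.rpow_add (hL i)]; simp
  have hxL := mul_pos (hx0 i) (hL i)
  have hyL := mul_pos (hy0 i) (hL i)
  rw [Real.div_rpow hxL.le hDx.le, Real.div_rpow hyL.le hDy.le, div_mul_div_comm, ← hE,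
    Real.mul_rpow (hx0 i).le (hL i).le, Real.mul_rpow (hy0 i).le (hL i).le, mul_assoc t,
    mul_div_mul_left _ _ htpos.ne', hz]
  congr 1
  linear_combination (-(x i ^ α * y i ^ (1 - α))) * hLL
end

section
/- Change-of-variables form of the main theorem: let n ≥ 2, a > 0 and K ≥ 0, and define X(x) = a + K·∑_{i=1}^n x_i + ∏_{i=1}^n (1+x_i) − 1 for x ∈ [0,∞)^n. Then for every x¹, x² ∈ (0,∞)^n and every α ∈ [0,1], there exists x* ∈ (0,∞)^n such that for every i ∈ {1,…,n}, x*_i / X(x*) = (x¹_i / X(x¹))^α · (x²_i / X(x²))^{1−α}. -/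
open Finset

/-- Normalized mean MAC slot duration `X(x) = a + K·∑ xᵢ + ∏(1+xᵢ) − 1`. -/
noncomputable def Xfun {n : ℕ} (a K : ℝ) (x : Fin n → ℝ) : ℝ :=
  a + K * ∑ i, x i + ∏ i, (1 + x i) - 1

theorem holder_two {α A B C D : ℝ} (h0 : 0 ≤ α) (h1 : α ≤ 1) (hA : 0 ≤ A) (hB : 0 ≤ B)
    (hC : 0 ≤ C) (hD : 0 ≤ D) :
    A ^ α * B ^ (1 - α) + C ^ α * D ^ (1 - α) ≤ (A + C) ^ α * (B + D) ^ (1 - α) := by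
  rcases h0.eq_or_lt with rfl | h0'
  · simp
  rcases h1.eq_or_lt with rfl | h1'
  · simp
  have hα : α ≠ 0 := h0'.ne'
  have hα' : 1 - α ≠ 0 := by linarith
  rcases (add_nonneg hA hC).eq_or_lt with h | hU
  · have : A = 0 := by linarith
    have : C = 0 := by linarith
    subst A; subst C
    simp [Real.zero_rpow hα]
  rcases (add_nonneg hB hD).eq_or_lt with h | hV
  · have : B = 0 := by linarith
    have : D = 0 := by linarith
    subst B; subst D
    simp [Real.zero_rpow hα']
  have e1 := Real.geom_mean_le_arith_mean2_weighted h0 (sub_nonneg.2 h1)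
    (div_nonneg hA hU.le) (div_nonneg hB hV.le) (by ring)
  have e2 := Real.geom_mean_le_arith_mean2_weighted h0 (sub_nonneg.2 h1)
    (div_nonneg hC hU.le) (div_nonneg hD hV.le) (by ring)
  rw [Real.div_rpow hA hU.le, Real.div_rpow hB hV.le] at e1
  rw [Real.div_rpow hC hU.le, Real.div_rpow hD hV.le] at e2
  have pU := Real.rpow_pos_of_pos hU α
  have pV := Real.rpow_pos_of_pos hV (1 - α)
  have e3 : α * (A / (A + C)) + (1 - α) * (B / (B + D)) +
      (α * (C / (A + C)) + (1 - α) * (D / (B + D))) = 1 := by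
    field_simp
    ring
  have e4 := (add_le_add e1 e2).trans e3.le
  rw [div_mul_div_comm, div_mul_div_comm, ← add_div, div_le_one (by positivity)] at e4
  exact e4

theorem holder_sum {ι : Type*} {α : ℝ} (h0 : 0 ≤ α) (h1 : α ≤ 1) (s : Finset ι) (u v : ι → ℝ)
    (hu : ∀ i, 0 ≤ u i) (hv : ∀ i, 0 ≤ v i) :
    ∑ i ∈ s, u i ^ α * v i ^ (1 - α) ≤ (∑ i ∈ s, u i) ^ α * (∑ i ∈ s, v i) ^ (1 - α) := by
  classical
  induction s using Finset.induction_on with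
  | empty => simp; positivity
  | insert i s hi ih =>
    rw [Finset.sum_insert hi, Finset.sum_insert hi, Finset.sum_insert hi]
    exact (add_le_add le_rfl ih).trans (holder_two h0 h1 (hu i) (hv i)
      (Finset.sum_nonneg fun j _ => hu j) (Finset.sum_nonneg fun j _ => hv j))

theorem rpow_split {α c : ℝ} (hc : 0 ≤ c) : c ^ α * c ^ (1 - α) = c := by
  rw [← Real.rpow_add' hc (by simp)]
  simp

theorem Xfun_expand {n : ℕ} (a K : ℝ) (x : Fin n → ℝ) :
    Xfun a K x = a + (K * ∑ i, x i +
      ∑ s ∈ (Finset.univ : Finset (Fin n)).powerset.erase ∅, ∏ i ∈ s, x i) := by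
  have h := Finset.add_sum_erase (Finset.univ : Finset (Fin n)).powerset
    (fun s => ∏ i ∈ s, x i) (Finset.empty_mem_powerset _)
  rw [← Finset.prod_one_add] at h
  simp only [Finset.prod_empty] at h
  unfold Xfun
  linarith

theorem Xfun_logconvex {n : ℕ} {a K α : ℝ} (ha : 0 < a) (hK : 0 ≤ K)
    (h0 : 0 ≤ α) (h1 : α ≤ 1) (x y : Fin n → ℝ) (hx : ∀ i, 0 < x i) (hy : ∀ i, 0 < y i) :
    Xfun a K (fun i => x i ^ α * y i ^ (1 - α)) ≤ Xfun a K x ^ α * Xfun a K y ^ (1 - α) := by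
  rw [Xfun_expand, Xfun_expand, Xfun_expand]
  have sx : 0 ≤ ∑ i, x i := Finset.sum_nonneg fun i _ => (hx i).le
  have sy : 0 ≤ ∑ i, y i := Finset.sum_nonneg fun i _ => (hy i).le
  have px : ∀ s : Finset (Fin n), 0 ≤ ∏ i ∈ s, x i :=
    fun s => Finset.prod_nonneg fun i _ => (hx i).le
  have py : ∀ s : Finset (Fin n), 0 ≤ ∏ i ∈ s, y i :=
    fun s => Finset.prod_nonneg fun i _ => (hy i).le
  have e1 : K * ∑ i, x i ^ α * y i ^ (1 - α) ≤
      (K * ∑ i, x i) ^ α * (K * ∑ i, y i) ^ (1 - α) := by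
    rw [Real.mul_rpow hK sx, Real.mul_rpow hK sy, mul_mul_mul_comm, rpow_split hK]
    exact mul_le_mul_of_nonneg_left
      (holder_sum h0 h1 _ x y (fun i => (hx i).le) (fun i => (hy i).le)) hK
  have e2 := holder_sum h0 h1 ((Finset.univ : Finset (Fin n)).powerset.erase ∅)
    (fun s => ∏ i ∈ s, x i) (fun s => ∏ i ∈ s, y i) px py
  have e3 : ∀ s : Finset (Fin n), ∏ i ∈ s, x i ^ α * y i ^ (1 - α) =
      (∏ i ∈ s, x i) ^ α * (∏ i ∈ s, y i) ^ (1 - α) := by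
    intro s
    rw [Finset.prod_mul_distrib, Real.finsetProd_rpow _ _ (fun i _ => (hx i).le),
      Real.finsetProd_rpow _ _ (fun i _ => (hy i).le)]
  simp only [e3]
  have qx := Finset.sum_nonneg (s := (Finset.univ : Finset (Fin n)).powerset.erase ∅)
    fun s _ => px s
  have qy := Finset.sum_nonneg (s := (Finset.univ : Finset (Fin n)).powerset.erase ∅)
    fun s _ => py s
  have e4 := (add_le_add e1 e2).trans (holder_two h0 h1 (mul_nonneg hK sx) (mul_nonneg hK sy) qx qy)
  have e5 := holder_two h0 h1 ha.le ha.le (add_nonneg (mul_nonneg hK sx) qx)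
    (add_nonneg (mul_nonneg hK sy) qy)
  rw [rpow_split ha.le] at e5
  exact (add_le_add le_rfl e4).trans e5

theorem Xfun_pos {n : ℕ} {a K : ℝ} (ha : 0 < a) (hK : 0 ≤ K) (x : Fin n → ℝ)
    (hx : ∀ i, 0 < x i) : 0 < Xfun a K x := by
  rw [Xfun_expand]
  have sx : 0 ≤ ∑ i, x i := Finset.sum_nonneg fun i _ => (hx i).le
  have qx := Finset.sum_nonneg (s := (Finset.univ : Finset (Fin n)).powerset.erase ∅)
    fun s _ => (Finset.prod_nonneg fun i _ => (hx i).le : 0 ≤ ∏ i ∈ s, x i)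
  positivity

/-- change-of-variables form of log-convexity of the rate region. -/
theorem log_convex_change_of_variables (n : ℕ) (hn : 2 ≤ n)
    (a K : ℝ) (ha : 0 < a) (hK : 0 ≤ K)
    (x₁ x₂ : Fin n → ℝ) (hx₁ : ∀ i, 0 < x₁ i) (hx₂ : ∀ i, 0 < x₂ i)
    (α : ℝ) (hα : α ∈ Set.Icc (0:ℝ) 1) :
    ∃ x' : Fin n → ℝ, (∀ i, 0 < x' i) ∧
      ∀ i, x' i / Xfun a K x' =
        (x₁ i / Xfun a K x₁) ^ α * (x₂ i / Xfun a K x₂) ^ (1 - α) := by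
  obtain ⟨h0, h1⟩ := hα
  have P1 := Xfun_pos ha hK x₁ hx₁
  have P2 := Xfun_pos ha hK x₂ hx₂
  have L := Xfun_logconvex ha hK h0 h1 x₁ x₂ hx₁ hx₂
  set X1 := Xfun a K x₁
  set X2 := Xfun a K x₂
  set r : Fin n → ℝ := fun i => (x₁ i / X1) ^ α * (x₂ i / X2) ^ (1 - α) with hr
  have rpos : ∀ i, 0 < r i := fun i =>
    mul_pos (Real.rpow_pos_of_pos (div_pos (hx₁ i) P1) _)
      (Real.rpow_pos_of_pos (div_pos (hx₂ i) P2) _)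
  have Q1 := Real.rpow_pos_of_pos P1 α
  have Q2 := Real.rpow_pos_of_pos P2 (1 - α)
  set T := X1 ^ α * X2 ^ (1 - α) with hT
  have Tpos : 0 < T := mul_pos Q1 Q2
  have hz : (fun i => T * r i) = fun i => x₁ i ^ α * x₂ i ^ (1 - α) := by
    funext i
    simp only [hr, hT]
    rw [Real.div_rpow (hx₁ i).le P1.le, Real.div_rpow (hx₂ i).le P2.le]
    field_simp
  rw [← hz] at L
  have hc : Continuous fun t : ℝ => Xfun a K (fun i => t * r i) - t := by
    unfold Xfun
    fun_prop
  have hg0 : Xfun a K (fun i => (0:ℝ) * r i) - 0 = a := by simp [Xfun]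
  obtain ⟨t, ⟨ht0, -⟩, ht⟩ := intermediate_value_Icc' Tpos.le hc.continuousOn
    (show (0:ℝ) ∈ Set.Icc _ _ from ⟨by simpa using L, by simpa only [hg0] using ha.le⟩)
  simp only at ht
  have tpos : 0 < t := by
    rcases ht0.eq_or_lt with h | h
    · subst h
      rw [hg0] at ht
      exact absurd ht ha.ne'
    · exact h
  refine ⟨fun i => t * r i, fun i => mul_pos tpos (rpos i), fun i => ?_⟩
  have e : Xfun a K (fun i => t * r i) = t := by linarith
  rw [e]
  change t * r i / t = r i
  field_simp
end

section
/- Strict convexity of the defining function: let n ≥ 2, a ≥ 0, K ≥ 0 and y ∈ [0,∞)^n, and suppose there exist at least two indices i ≠ j with y_i > 0 and y_j > 0. Then the function g(δ) = δ·( a + K·∑_{i=1}^n y_i/δ + ∏_{i=1}^n (1 + y_i/δ) − 1 ) is strictly convex on (0,∞). -/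
open Finset

/-- The function `g(δ) = δ·( a + K·∑ yᵢ/δ + ∏(1 + yᵢ/δ) − 1 )`. -/
noncomputable def gfun {n : ℕ} (a K : ℝ) (y : Fin n → ℝ) (δ : ℝ) : ℝ :=
  δ * (a + K * ∑ i, y i / δ + ∏ i, (1 + y i / δ) - 1)

lemma aux_prod {n : ℕ} (y : Fin n → ℝ) (hy : ∀ i, 0 ≤ y i) (s : Finset (Fin n)) :
    ConvexOn ℝ (Set.Ioi (0:ℝ)) (fun t => ∏ i ∈ s, (1 + y i * t)) ∧
    MonotoneOn (fun t => ∏ i ∈ s, (1 + y i * t)) (Set.Ioi (0:ℝ)) ∧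
    ∀ t, 0 < t → 1 ≤ ∏ i ∈ s, (1 + y i * t) := by
  have h1 : ∀ k t, 0 < t → 1 ≤ 1 + y k * t := by
    intro k t ht
    have := mul_nonneg (hy k) ht.le
    linarith
  have hmono : ∀ s : Finset (Fin n),
      MonotoneOn (fun t => ∏ i ∈ s, (1 + y i * t)) (Set.Ioi (0:ℝ)) := by
    intro s u hu v hv huv
    apply Finset.prod_le_prod
    · intro k _
      linarith [h1 k u hu]
    · intro k _
      have := mul_le_mul_of_nonneg_left huv (hy k)
      linarith
  have hone : ∀ s : Finset (Fin n), ∀ t, 0 < t → 1 ≤ ∏ i ∈ s, (1 + y i * t) := by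
    intro s t ht
    induction s using Finset.induction_on with
    | empty => simp
    | insert k s hk ih =>
      rw [Finset.prod_insert hk]
      exact one_le_mul_of_one_le_of_one_le (h1 k t ht) ih
  refine ⟨?_, hmono s, hone s⟩
  induction s using Finset.induction_on with
  | empty => simpa using convexOn_const (1:ℝ) (convex_Ioi (0:ℝ))
  | insert k s hk ih =>
    simp only [Finset.prod_insert hk]
    have hl : ConvexOn ℝ (Set.Ioi (0:ℝ)) (fun t => 1 + y k * t) := by
      refine ⟨convex_Ioi 0, ?_⟩
      intro u _ v _ p q _ _ hpq
      simp only [smul_eq_mul]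
      apply le_of_eq
      linear_combination -hpq
    have hlm : MonotoneOn (fun t => 1 + y k * t) (Set.Ioi (0:ℝ)) := by
      intro u _ v _ huv
      have := mul_le_mul_of_nonneg_left huv (hy k)
      simp only
      linarith
    exact hl.mul ih (fun u hu => by linarith [h1 k u hu])
      (fun u hu => by linarith [hone s u hu]) (hlm.monovaryOn (hmono s))

lemma aux_strict {n : ℕ} (y : Fin n → ℝ) (hy : ∀ i, 0 ≤ y i)
    (i j : Fin n) (hij : i ≠ j) (hyi : 0 < y i) (hyj : 0 < y j) :
    StrictConvexOn ℝ (Set.Ioi (0:ℝ)) (fun t => ∏ i, (1 + y i * t)) := by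
  obtain ⟨hc, hm, h1⟩ := aux_prod y hy ((univ.erase i).erase j)
  obtain ⟨bc, bm, b1⟩ := aux_prod y hy {i, j}
  have key : ∀ t, ∏ k, (1 + y k * t) = (∏ k ∈ {i, j}, (1 + y k * t)) +
      (∏ k ∈ {i, j}, (1 + y k * t)) * (∏ k ∈ (univ.erase i).erase j, (1 + y k * t) + (-1)) := by
    intro t
    rw [← Finset.mul_prod_erase univ _ (mem_univ i),
      ← Finset.mul_prod_erase (univ.erase i) _ (mem_erase.2 ⟨hij.symm, mem_univ j⟩),
      Finset.prod_pair hij]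
    ring
  simp only [key]
  have hB : StrictConvexOn ℝ (Set.Ioi (0:ℝ)) (fun t => ∏ k ∈ {i, j}, (1 + y k * t)) := by
    refine ⟨convex_Ioi 0, ?_⟩
    intro u _ v _ huv p q hp hq hpq
    simp only [smul_eq_mul, Finset.prod_pair hij]
    have h2 : 0 < (u - v)^2 := by
      have := sub_ne_zero.2 huv
      positivity
    have h3 : 0 < y i * y j * p * q * (u - v)^2 := by positivity
    obtain rfl : q = 1 - p := by linarith
    nlinarith
  apply hB.add_convexOn
  exact bc.mul (hc.add_const (-1)) (fun u hu => by linarith [b1 u hu])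
    (fun u hu => by simpa using h1 u hu)
    (bm.monovaryOn (hm.add_const (-1)))

/-- `g` is strictly convex on `(0,∞)` whenever at least two
components of `y` are strictly positive. -/
theorem gfun_strictConvexOn (n : ℕ) (hn : 2 ≤ n)
    (a K : ℝ) (ha : 0 ≤ a) (hK : 0 ≤ K)
    (y : Fin n → ℝ) (hy : ∀ i, 0 ≤ y i)
    (i j : Fin n) (hij : i ≠ j) (hyi : 0 < y i) (hyj : 0 < y j) :
    StrictConvexOn ℝ (Set.Ioi (0:ℝ)) (gfun a K y) := by
  have hP := aux_strict y hy i j hij hyi hyj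
  have hg : ∀ d, 0 < d → gfun a K y d =
      (a - 1) * d + K * ∑ i, y i + d * ∏ i, (1 + y i * d⁻¹) := by
    intro d hd
    simp only [gfun, ← Finset.sum_div]
    simp only [div_eq_mul_inv]
    have : d * d⁻¹ = 1 := mul_inv_cancel₀ hd.ne'
    linear_combination (K * ∑ i, y i) * this
  refine ⟨convex_Ioi 0, ?_⟩
  intro u hu v hv huv p q hp hq hpq
  simp only [Set.mem_Ioi] at hu hv
  simp only [smul_eq_mul]
  have hw : 0 < p * u + q * v := by positivity
  rw [hg _ hu, hg _ hv, hg _ hw]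
  have h := hP.2 (inv_pos.2 hu) (inv_pos.2 hv) (fun h => huv (inv_injective h))
    (show 0 < p * u / (p * u + q * v) by positivity)
    (show 0 < q * v / (p * u + q * v) by positivity) (by field_simp)
  simp only [smul_eq_mul] at h
  have e : p * u / (p * u + q * v) * u⁻¹ + q * v / (p * u + q * v) * v⁻¹
      = (p * u + q * v)⁻¹ := by
    field_simp
    exact hpq
  rw [e] at h
  have h' := mul_lt_mul_of_pos_left h hw
  generalize ∏ i, (1 + y i * u⁻¹) = A at *
  generalize ∏ i, (1 + y i * v⁻¹) = B at *
  have e2 : (p * u + q * v) * (p * u / (p * u + q * v) * A + q * v / (p * u + q * v) * B)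
      = p * u * A + q * v * B := by
    field_simp
  rw [e2] at h'
  have e3 : K * ∑ i, y i = p * (K * ∑ i, y i) + q * (K * ∑ i, y i) := by
    rw [← add_mul, hpq, one_mul]
  linarith
end

section
/- Second-derivative formula: let n ≥ 2, a ≥ 0, K ≥ 0 and y ∈ [0,∞)^n, and let g(δ) = δ·( a + K·∑_{i=1}^n y_i/δ + ∏_{i=1}^n (1 + y_i/δ) − 1 ). Then g is twice differentiable on (0,∞), and for every δ > 0, g''(δ) = δ^{−3} · ∑_{i≠j} y_i y_j ∏_{k ≠ i, k ≠ j} (1 + y_k/δ), where the sum is over ordered pairs of distinct indices i, j ∈ {1,…,n} and a product over an empty index set equals 1. -/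
open Finset

/-- Derivative of a finite product of factors `1 + yᵢ/x`. -/
lemma hasDerivAt_prod_aux {n : ℕ} (y : Fin n → ℝ) (s : Finset (Fin n)) (x : ℝ) (hx : 0 < x) :
    HasDerivAt (fun t : ℝ => ∏ i ∈ s, (1 + y i / t))
      (-(x⁻¹ ^ 2) * ∑ i ∈ s, y i * ∏ j ∈ s.erase i, (1 + y j / x)) x := by
  have h : ∀ i ∈ s, HasDerivAt (fun t : ℝ => 1 + y i / t) (-(x⁻¹ ^ 2) * y i) x := by
    intro i _
    have h1 := ((hasDerivAt_inv hx.ne').const_mul (y i)).const_add 1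
    simp only [← div_eq_mul_inv (y i)] at h1
    refine HasDerivAt.congr_deriv h1 ?_
    field_simp
  have := HasDerivAt.fun_finsetProd h
  refine HasDerivAt.congr_deriv this ?_
  rw [Finset.mul_sum]
  refine Finset.sum_congr rfl fun i _ => ?_
  simp only [smul_eq_mul]
  ring

lemma hasDerivAt_gfun_aux {n : ℕ} (a K : ℝ) (y : Fin n → ℝ) (x : ℝ) (hx : 0 < x) :
    HasDerivAt (gfun a K y)
      (a + ∏ i, (1 + y i / x) - 1
        - x⁻¹ * ∑ i, y i * ∏ j ∈ univ.erase i, (1 + y j / x)) x := by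
  have hP := hasDerivAt_prod_aux y univ x hx
  have h1 := (((hasDerivAt_id' x).mul (hP.const_add (a - 1))).add_const (K * ∑ i, y i))
  have h2 := h1.congr_of_eventuallyEq (f₁ := gfun a K y) (by
    filter_upwards [lt_mem_nhds hx] with t ht
    simp only [gfun, Pi.mul_apply, ← Finset.sum_div]
    field_simp
    ring)
  refine HasDerivAt.congr_deriv h2 ?_
  field_simp
  ring

lemma hasDerivAt_deriv_gfun_aux {n : ℕ} (a K : ℝ) (y : Fin n → ℝ) (x : ℝ) (hx : 0 < x) :
    HasDerivAt (deriv (gfun a K y))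
      (x⁻¹ ^ 3 * ∑ i, ∑ j ∈ univ.erase i,
          y i * y j * ∏ k ∈ (univ.erase i).erase j, (1 + y k / x)) x := by
  have hP := hasDerivAt_prod_aux y univ x hx
  have hS := HasDerivAt.fun_sum (u := univ) fun i (_ : i ∈ univ) =>
    (hasDerivAt_prod_aux y (univ.erase i) x hx).const_mul (y i)
  have h1 := ((hP.const_add a).sub_const 1).sub ((hasDerivAt_inv hx.ne').mul hS)
  have h2 := h1.congr_of_eventuallyEq (f₁ := deriv (gfun a K y)) (by
    filter_upwards [lt_mem_nhds hx] with t ht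
    rw [(hasDerivAt_gfun_aux a K y t ht).deriv]
    simp)
  refine HasDerivAt.congr_deriv h2 ?_
  have e : ∑ i, y i * (-(x⁻¹ ^ 2) * ∑ j ∈ univ.erase i,
        y j * ∏ k ∈ (univ.erase i).erase j, (1 + y k / x))
      = -(x⁻¹ ^ 2) * ∑ i, ∑ j ∈ univ.erase i,
          y i * y j * ∏ k ∈ (univ.erase i).erase j, (1 + y k / x) := by
    rw [Finset.mul_sum]
    refine Finset.sum_congr rfl fun i _ => ?_
    rw [mul_left_comm, Finset.mul_sum]
    simp only [mul_assoc]
  rw [e]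
  ring

/-- `g` is twice differentiable on `(0,∞)` and its second
derivative equals `δ⁻³ · ∑_{i≠j} yᵢ yⱼ ∏_{k≠i,j} (1 + yₖ/δ)`, the sum being
over ordered pairs of distinct indices. -/
theorem gfun_second_deriv (n : ℕ) (hn : 2 ≤ n)
    (a K : ℝ) (ha : 0 ≤ a) (hK : 0 ≤ K)
    (y : Fin n → ℝ) (hy : ∀ i, 0 ≤ y i) :
    (∀ δ ∈ Set.Ioi (0:ℝ), DifferentiableAt ℝ (gfun a K y) δ) ∧
    (∀ δ ∈ Set.Ioi (0:ℝ), DifferentiableAt ℝ (deriv (gfun a K y)) δ) ∧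
    ∀ δ ∈ Set.Ioi (0:ℝ),
      deriv (deriv (gfun a K y)) δ =
        δ⁻¹ ^ 3 * ∑ i, ∑ j ∈ univ.erase i,
          y i * y j * ∏ k ∈ (univ.erase i).erase j, (1 + y k / δ) := by
  exact ⟨fun x hx => (hasDerivAt_gfun_aux a K y x hx).differentiableAt,
    fun x hx => (hasDerivAt_deriv_gfun_aux a K y x hx).differentiableAt,
    fun x hx => (hasDerivAt_deriv_gfun_aux a K y x hx).deriv⟩
end

section
/- Boundary behaviour: let n ≥ 2, a ≥ 0, K ≥ 0, y ∈ (0,∞)^n, and let g(δ) = δ·( a + K·∑_{i=1}^n y_i/δ + ∏_{i=1}^n (1 + y_i/δ) − 1 ). Then g(δ) → +∞ as δ → 0⁺; and if in addition a > 0, then g(δ) → +∞ as δ → +∞. -/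
open Finset Filter

/-- boundary behaviour of `g`: it blows up as `δ → 0⁺`, and also
as `δ → +∞` provided `a > 0`. -/
theorem gfun_boundary_behaviour (n : ℕ) (hn : 2 ≤ n)
    (a K : ℝ) (ha : 0 ≤ a) (hK : 0 ≤ K)
    (y : Fin n → ℝ) (hy : ∀ i, 0 < y i) :
    Tendsto (gfun a K y) (nhdsWithin 0 (Set.Ioi 0)) atTop ∧
    (0 < a → Tendsto (gfun a K y) atTop atTop) := by
  obtain ⟨m, rfl⟩ : ∃ m, n = m + 2 := ⟨n - 2, by omega⟩
  have key : ∀ δ : ℝ, 0 < δ → a * δ + y 0 * y 1 / δ ≤ gfun a K y δ := by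
    intro δ hδ
    have hq : ∀ i, 0 < y i / δ := fun i => div_pos (hy i) hδ
    have hS : 0 ≤ K * ∑ i, y i / δ :=
      mul_nonneg hK (Finset.sum_nonneg fun i _ => (hq i).le)
    have hP : (1 + y 0 / δ) * (1 + y 1 / δ) ≤ ∏ i, (1 + y i / δ) := by
      rw [Fin.prod_univ_succ, Fin.prod_univ_succ, ← mul_assoc]
      have h1 : (1 : ℝ) ≤ ∏ i : Fin m, (1 + y i.succ.succ / δ) := by
        have := Finset.prod_le_prod (s := Finset.univ) (f := fun _ : Fin m => (1 : ℝ))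
          (g := fun i : Fin m => 1 + y i.succ.succ / δ) (fun _ _ => zero_le_one)
          (fun i _ => by have := hq i.succ.succ; linarith)
        simpa using this
      have h0 := hq 0
      have h01 := hq 1
      exact le_mul_of_one_le_right (by positivity) h1
    have h0 := hq 0
    have h1 := hq 1
    have e : a * δ + y 0 * y 1 / δ = δ * (a + (y 0 / δ) * (y 1 / δ)) := by
      field_simp
    rw [e]
    unfold gfun
    apply mul_le_mul_of_nonneg_left _ hδ.le
    nlinarith
  constructor
  · have hc : 0 < y 0 * y 1 := mul_pos (hy 0) (hy 1)
    refine tendsto_atTop_mono' _ ?_ (tendsto_inv_nhdsGT_zero.const_mul_atTop hc)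
    filter_upwards [self_mem_nhdsWithin] with δ hδ
    have hδ : 0 < δ := hδ
    have := key δ hδ
    have h2 := mul_nonneg ha hδ.le
    rw [← div_eq_mul_inv]
    linarith
  · intro ha'
    refine tendsto_atTop_mono' _ ?_ (tendsto_id.const_mul_atTop ha')
    filter_upwards [eventually_gt_atTop 0] with δ hδ
    have := key δ hδ
    have h2 := div_pos (mul_pos (hy 0) (hy 1)) hδ
    simp only [id]
    linarith
end
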